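/- Let m ≥ 2, r ≥ 1 and q ≥ 2 be integers, and let a = N_a/m^{s_a} ∈ ℤ[1/m] with 0 < a < r, where N_a, s_a are integers. The following are equivalent: (1) there exists f ∈ T_{r,m} of order q with f(0) = a and rotation number 1/q; (2) r − qa ∈ (m−1)·ℤ[1/m]; (3) r − q·N_a is a multiple of m−1. -/

import Mathlib

/-!
Write `I = (m-1)·ℤ[1/m]`. Every power of `m` is congruent to `1` modulo `I`.

(2) ⟺ (3): `q·a` and `q·N_a` differ by `q·N_a·(m^(-s_a) - 1) ∈ I` (up to sign), and an integer
lies in `I` iff `m-1` divides it, because `m-1` and `m` are coprime (`cond_iff`).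

(1) ⟹ (2): since slopes are `1` modulo `I`, a lift `F` of an element of `T_{r,m}` satisfies
`F x ≡ x + F 0` modulo `I` on `ℤ[1/m]` (`lift_congr`). The lift `H` of `f` with `H 0 = a`
therefore has `H^q 0 ≡ q·a`. As `f^q = 1`, `H^q 0` is a multiple of `r`; the rotation number
makes it `(1 + k·q)·r` for some integer `k`, and `0 ≤ H^q 0 < q·r` forces `k = 0`. Hence
`r ≡ q·a` (`forward`). The lift that computes the rotation number is only assumed monotone;
`lift_unique` shows that it differs from the `PL_m` one by a constant.

(2) ⟹ (1): there is a `PL_m` homeomorphism `h` from the circle of length `q·a` to the circle of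
length `r` that is the identity on `[0, a]` (`exists_model`). On `[a, q·a]` it is enough to use
two consecutive slopes `m^(t+1)` and `m^t`, with `t` chosen so that the average slope
`(r - a)/(q·a - a)` lies in `[m^t, m^(t+1))`; the point where the slope changes is the solution
of a linear equation, and the congruence `r ≡ q·a` is what puts it in `ℤ[1/m]`. The conjugate
by `h` of the translation by `a` is `PL_m` (`conj_isPLmLift`), has order `q` and rotation
number `1/q`, and sends `0` to `a` (`backward`).
-/

open Filter Topology

/-- The set `ℤ[1/m] = {N·m^s : N, s ∈ ℤ}` as a subset of `ℝ`. -/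
def ZInvM (m : ℕ) : Set ℝ := {x : ℝ | ∃ N s : ℤ, x = (N : ℝ) * (m : ℝ) ^ s}

/-- `F : ℝ → ℝ` is a lift of an orientation-preserving `PL_m` homeomorphism from the
circle `ℝ/rℤ` to the circle `ℝ/r'ℤ`: it is strictly increasing, commutes appropriately
with the translations, and is affine on the pieces of a finite subdivision
`0 = a₀ < a₁ < ... < aₙ = r` of `[0, r]`, with slopes powers of `m`, breakpoints in
`ℤ[1/m]` and images of breakpoints in `ℤ[1/m]`. -/
def IsPLmLift (m : ℕ) (r r' : ℝ) (F : ℝ → ℝ) : Prop :=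
  StrictMono F ∧ (∀ x : ℝ, F (x + r) = F x + r') ∧
    ∃ (n : ℕ) (a : Fin (n + 1) → ℝ),
      StrictMono a ∧ a 0 = 0 ∧ a (Fin.last n) = r ∧
      (∀ i, a i ∈ ZInvM m) ∧ (∀ i, F (a i) ∈ ZInvM m) ∧
      ∀ i : Fin n, ∃ (s : ℤ) (β : ℝ),
        ∀ x ∈ Set.Icc (a i.castSucc) (a i.succ), F x = (m : ℝ) ^ s * x + β

/-- Membership in the Brown–Thompson group `T_{r,m}`, viewed inside the permutations of
the circle `ℝ/rℤ`: `f` is induced by a `PL_m` lift. -/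
def InT (r m : ℕ) (f : Equiv.Perm (AddCircle (r : ℝ))) : Prop :=
  ∃ F : ℝ → ℝ, IsPLmLift m r r F ∧ ∀ x : ℝ, f ↑x = ↑(F x)

/-- The circle homeomorphism `f` of `ℝ/rℤ` has rotation number `ρ ∈ ℝ/ℤ`: some monotone
lift `F` of `f` commuting with translation by `r` satisfies `F^[n] 0 / (r·n) → L`
with `L ≡ ρ (mod 1)`. -/
def HasRotNum (r : ℝ) (f : Equiv.Perm (AddCircle r)) (ρ : AddCircle (1 : ℝ)) : Prop :=
  ∃ F : ℝ → ℝ, Monotone F ∧ (∀ x : ℝ, F (x + r) = F x + r) ∧ (∀ x : ℝ, f ↑x = ↑(F x)) ∧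
    ∃ L : ℝ, Tendsto (fun n : ℕ => F^[n] 0 / (r * n)) atTop (𝓝 L) ∧
      ((L : AddCircle (1 : ℝ)) = ρ)

/-! ### Arithmetic of `ℤ[1/m]` modulo `m - 1` -/

/-- The ideal `(m-1)·ℤ[1/m]` of `ℤ[1/m]`, as a subset of `ℝ`. -/
def IdealM (m : ℕ) : Set ℝ := {x : ℝ | ∃ z ∈ ZInvM m, x = ((m : ℝ) - 1) * z}

section arith
variable {m : ℕ} (hm : 2 ≤ m)
include hm

lemma mpos : (0 : ℝ) < m := by
  have : (2 : ℝ) ≤ m := by exact_mod_cast hm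
  linarith

lemma mem_Z_iff {x : ℝ} : x ∈ ZInvM m ↔ ∃ (k : ℕ) (N : ℤ), x * (m : ℝ) ^ k = N := by
  have h0 := (mpos hm).ne'
  constructor
  · rintro ⟨N, s, rfl⟩
    rcases Int.eq_nat_or_neg s with ⟨k, rfl | rfl⟩
    · exact ⟨0, N * (m : ℤ) ^ k, by push_cast; simp⟩
    · exact ⟨k, N, by rw [zpow_neg, zpow_natCast]; field_simp⟩
  · rintro ⟨k, N, h⟩
    exact ⟨N, -(k : ℤ), by rw [← h, zpow_neg, zpow_natCast]; field_simp⟩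

lemma Z_add {x y : ℝ} (hx : x ∈ ZInvM m) (hy : y ∈ ZInvM m) : x + y ∈ ZInvM m := by
  rw [mem_Z_iff hm] at *
  obtain ⟨k, N, h⟩ := hx
  obtain ⟨l, M, h'⟩ := hy
  refine ⟨k + l, N * (m : ℤ) ^ l + M * (m : ℤ) ^ k, ?_⟩
  push_cast
  rw [← h, ← h']
  ring

lemma Z_mul {x y : ℝ} (hx : x ∈ ZInvM m) (hy : y ∈ ZInvM m) : x * y ∈ ZInvM m := by
  rw [mem_Z_iff hm] at *
  obtain ⟨k, N, h⟩ := hx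
  obtain ⟨l, M, h'⟩ := hy
  refine ⟨k + l, N * M, ?_⟩
  push_cast
  rw [← h, ← h']
  ring

omit hm in
lemma Z_int (n : ℤ) : (n : ℝ) ∈ ZInvM m := ⟨n, 0, by simp⟩

omit hm in
lemma Z_nat (n : ℕ) : (n : ℝ) ∈ ZInvM m := ⟨n, 0, by simp⟩

omit hm in
lemma Z_zpow (s : ℤ) : (m : ℝ) ^ s ∈ ZInvM m := ⟨1, s, by simp⟩

omit hm in
lemma Z_neg {x : ℝ} (hx : x ∈ ZInvM m) : -x ∈ ZInvM m := by
  obtain ⟨N, s, rfl⟩ := hx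
  exact ⟨-N, s, by push_cast; ring⟩

lemma Z_sub {x y : ℝ} (hx : x ∈ ZInvM m) (hy : y ∈ ZInvM m) : x - y ∈ ZInvM m := by
  rw [sub_eq_add_neg]; exact Z_add hm hx (Z_neg hy)

lemma I_add {x y : ℝ} (hx : x ∈ IdealM m) (hy : y ∈ IdealM m) : x + y ∈ IdealM m := by
  obtain ⟨z, hz, rfl⟩ := hx
  obtain ⟨w, hw, rfl⟩ := hy
  exact ⟨z + w, Z_add hm hz hw, by ring⟩

lemma I_mul {x y : ℝ} (hx : x ∈ ZInvM m) (hy : y ∈ IdealM m) : x * y ∈ IdealM m := by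
  obtain ⟨w, hw, rfl⟩ := hy
  exact ⟨x * w, Z_mul hm hx hw, by ring⟩

lemma I_sub {x y : ℝ} (hx : x ∈ IdealM m) (hy : y ∈ IdealM m) : x - y ∈ IdealM m := by
  obtain ⟨z, hz, rfl⟩ := hx
  obtain ⟨w, hw, rfl⟩ := hy
  exact ⟨z - w, Z_sub hm hz hw, by ring⟩

omit hm in
lemma I_zero : (0 : ℝ) ∈ IdealM m := ⟨0, by simpa using Z_int (m := m) 0, by simp⟩

lemma I_subset_Z {x : ℝ} (hx : x ∈ IdealM m) : x ∈ ZInvM m := by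
  obtain ⟨z, hz, rfl⟩ := hx
  refine Z_mul hm ?_ hz
  simpa using Z_sub hm (Z_nat m) (Z_nat 1)

/-- Powers of `m`, the possible slopes, are congruent to `1` modulo `(m-1)·ℤ[1/m]`. -/
lemma zpow_sub_one_mem (s : ℤ) : (m : ℝ) ^ s - 1 ∈ IdealM m := by
  have h0 := (mpos hm).ne'
  have key : ∀ k : ℕ, (m : ℝ) ^ k - 1 ∈ IdealM m := by
    intro k
    obtain ⟨c, hc⟩ := sub_one_dvd_pow_sub_one (m : ℤ) k
    refine ⟨c, Z_int c, ?_⟩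
    exact_mod_cast hc
  rcases Int.eq_nat_or_neg s with ⟨k, rfl | rfl⟩
  · simpa using key k
  · have := I_mul hm (Z_neg (Z_zpow (m := m) (-(k : ℤ)))) (key k)
    convert this using 1
    rw [zpow_neg, zpow_natCast]
    field_simp
    ring

lemma int_mem_I_iff (n : ℤ) : (n : ℝ) ∈ IdealM m ↔ ((m : ℤ) - 1) ∣ n := by
  constructor
  · rintro ⟨z, hz, h⟩
    obtain ⟨k, N, hk⟩ := (mem_Z_iff hm).1 hz
    have h1 : n * (m : ℤ) ^ k = ((m : ℤ) - 1) * N := by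
      have : (n : ℝ) * (m : ℝ) ^ k = ((m : ℝ) - 1) * N := by rw [h, ← hk]; ring
      exact_mod_cast this
    have hc : IsCoprime ((m : ℤ) - 1) ((m : ℤ) ^ k) :=
      IsCoprime.pow_right ⟨-1, 1, by ring⟩
    exact hc.dvd_of_dvd_mul_right ⟨N, h1⟩
  · rintro ⟨c, rfl⟩
    exact ⟨c, Z_int c, by push_cast; ring⟩

/-- Conditions (2) and (3) agree because `q·a` and `q·N_a` differ by a multiple of
`m ^ (-s_a) - 1`. -/
lemma cond_iff (r q : ℕ) (Na sa : ℤ) :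
    (r : ℝ) - q * ((Na : ℝ) / (m : ℝ) ^ sa) ∈ IdealM m ↔
      ((m : ℤ) - 1) ∣ ((r : ℤ) - (q : ℤ) * Na) := by
  rw [← int_mem_I_iff hm]
  have h : (q : ℝ) * Na * ((m : ℝ) ^ (-sa) - 1) ∈ IdealM m :=
    I_mul hm (Z_mul hm (Z_nat q) (Z_int Na)) (zpow_sub_one_mem hm _)
  rw [zpow_neg] at h
  constructor
  · intro h'
    convert I_add hm h' h using 1
    push_cast
    ring
  · intro h'
    convert I_sub hm h' h using 1
    push_cast
    ring

/-! ### Necessity: lifts are translations modulo `m - 1` -/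

/-- A `PL_m` lift is a translation modulo `(m-1)·ℤ[1/m]` on the points of `ℤ[1/m]`. -/
lemma lift_congr {r : ℕ} (hr : 1 ≤ r) {F : ℝ → ℝ} (hF : IsPLmLift m r r F) {x : ℝ}
    (hx : x ∈ ZInvM m) : F x - x - F 0 ∈ IdealM m := by
  obtain ⟨-, hper, n, a, ha, ha0, har, haZ, hFZ, haff⟩ := hF
  have key : ∀ i : Fin (n + 1), ∀ y ∈ ZInvM m, 0 ≤ y → y ≤ a i → F y - y - F 0 ∈ IdealM m := by
    intro i
    induction i using Fin.induction with
    | zero =>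
      intro y _ h0 h1
      rw [ha0] at h1
      have : y = 0 := le_antisymm h1 h0
      subst this
      simpa using I_zero
    | succ i ih =>
      intro y hy h0 h1
      rcases le_total y (a i.castSucc) with h | h
      · exact ih y hy h0 h
      · obtain ⟨s, β, hs⟩ := haff i
        have e1 := hs y ⟨h, h1⟩
        have e2 := hs (a i.castSucc) ⟨le_rfl, h.trans h1⟩
        have h00 : 0 ≤ a i.castSucc := by
          rw [← ha0]; exact ha.monotone (Fin.zero_le _)
        have := I_add hm (ih _ (haZ _) h00 le_rfl)
          (I_mul hm (Z_sub hm hy (haZ i.castSucc)) (zpow_sub_one_mem hm s))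
        convert this using 1
        rw [e1, e2]
        ring
  have hr0 : (0 : ℝ) < r := by exact_mod_cast hr
  have hperZ : ∀ (k : ℤ) (x : ℝ), F (x + k * r) - (x + k * r) = F x - x := by
    intro k x
    have hp : Function.Periodic (fun x => F x - x) (r : ℝ) := by
      intro x
      simp only [hper]
      ring
    exact hp.int_mul k x
  set k := ⌊x / r⌋
  have h1 : (k : ℝ) * r ≤ x := by
    rw [← le_div_iff₀ hr0]; exact Int.floor_le _
  have h2 : x < (k + 1 : ℝ) * r := by
    rw [← div_lt_iff₀ hr0]; exact Int.lt_floor_add_one _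
  have := key (Fin.last n) (x - k * r) (Z_sub hm hx (Z_mul hm (Z_int k) (Z_nat r)))
    (by linarith) (by rw [har]; linarith)
  have e := hperZ k (x - k * r)
  rw [sub_add_cancel] at e
  rwa [e]

end arith

/-- Two lifts of the same circle map, one strictly monotone and one monotone, differ by a
constant: their difference takes values in `rℤ` and varies by less than `r` over a period. -/
lemma lift_unique {r : ℝ} (hr : 0 < r) {F G : ℝ → ℝ} (hF : StrictMono F)
    (hFp : ∀ x, F (x + r) = F x + r) (hG : Monotone G) (hGp : ∀ x, G (x + r) = G x + r)
    (h : ∀ x, ((F x : ℝ) : AddCircle r) = (G x : ℝ)) (x : ℝ) : G x - F x = G 0 - F 0 := by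
  have hp : Function.Periodic (fun x => G x - F x) r := by
    intro x
    simp only [hFp, hGp]
    ring
  have hn : ∀ x, ∃ n : ℤ, G x - F x = n * r := by
    intro x
    obtain ⟨n, hn⟩ := (AddCircle.coe_eq_zero_iff r).1
      (show ((G x - F x : ℝ) : AddCircle r) = 0 by rw [AddCircle.coe_sub, h x, sub_self])
    exact ⟨n, by rw [← hn]; simp⟩
  obtain ⟨y, ⟨hy0, hyr⟩, hy⟩ := hp.exists_mem_Ico₀ hr x
  rw [show G x - F x = G y - F y from hy]
  rcases hy0.eq_or_lt with rfl | hy0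
  · rfl
  obtain ⟨n, hn1⟩ := hn y
  obtain ⟨k, hk⟩ := hn 0
  have f1 := hF hy0
  have f2 := hF hyr
  have f3 := hFp 0
  have g1 := hG hy0.le
  have g2 := hG hyr.le
  have g3 := hGp 0
  rw [zero_add] at f3 g3
  have l1 : ((n - k : ℤ) : ℝ) * r < 1 * r := by push_cast; linarith
  have l2 : (-1) * r < ((n - k : ℤ) : ℝ) * r := by push_cast; linarith
  have l1' := lt_of_mul_lt_mul_right l1 hr.le
  have l2' := lt_of_mul_lt_mul_right l2 hr.le
  have : n - k < 1 := by exact_mod_cast l1'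
  have : -1 < n - k := by exact_mod_cast l2'
  have : n = k := by omega
  rw [hn1, hk, this]

lemma iterate_lift {r : ℝ} {f : Equiv.Perm (AddCircle r)} {F : ℝ → ℝ}
    (h : ∀ x : ℝ, f ↑x = ↑(F x)) (n : ℕ) (x : ℝ) : (f ^ n) ↑x = ↑(F^[n] x) := by
  induction n generalizing x with
  | zero => simp
  | succ n ih => rw [pow_succ, Equiv.Perm.mul_apply, h, ih, Function.iterate_succ_apply]

lemma add_mul_of_period {p c : ℝ} {F : ℝ → ℝ} (h : ∀ x, F (x + p) = F x + c) (k : ℤ) (x : ℝ) :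
    F (x + k * p) = F x + k * c := by
  induction k using Int.induction_on generalizing x with
  | zero => simp
  | succ i ih =>
    have := h (x + (i : ℤ) * p)
    rw [ih] at this
    push_cast at *
    rw [show x + ((i : ℝ) + 1) * p = x + i * p + p by ring, this]
    ring
  | pred i ih =>
    have := h (x + (-(i : ℝ) - 1) * p)
    have e := ih x
    push_cast at *
    rw [show x + (-(i : ℝ) - 1) * p + p = x + -(i : ℝ) * p by ring, e] at this
    linarith

/-- Implication (1) ⟹ (2). -/
lemma forward {m r q : ℕ} (hm : 2 ≤ m) (hr : 1 ≤ r) (hq : 2 ≤ q) {a : ℝ}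
    (haZ : a ∈ ZInvM m) (ha0 : 0 < a) (har : a < (r : ℝ)) {f : Equiv.Perm (AddCircle (r : ℝ))}
    (hT : InT r m f) (hord : orderOf f = q)
    (hrot : HasRotNum r f ((1 / (q : ℝ) : ℝ) : AddCircle (1 : ℝ)))
    (hf0 : f ((0 : ℝ) : AddCircle (r : ℝ)) = ((a : ℝ) : AddCircle (r : ℝ))) :
    (r : ℝ) - q * a ∈ IdealM m := by
  have hr0 : (0 : ℝ) < r := by exact_mod_cast hr
  have hq0 : (0 : ℝ) < q := by positivity
  obtain ⟨F, hF, hFf⟩ := hT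
  obtain ⟨G, hG, hGp, hGf, L, hL, hLq⟩ := hrot
  have hGF := lift_unique hr0 hF.1 hF.2.1 hG hGp (fun x => by rw [← hFf, hGf])
  obtain ⟨i, hi⟩ := (AddCircle.coe_eq_zero_iff (r : ℝ)).1
    (show ((G 0 - a : ℝ) : AddCircle (r : ℝ)) = 0 by
      rw [AddCircle.coe_sub, ← hGf, hf0, sub_self])
  rw [zsmul_eq_mul] at hi
  -- `H` is the lift of `f` with `H 0 = a`, so that its translation number lies in `[0, 1)`.
  set H : ℝ → ℝ := fun x => G x - i * r with hH
  have hH0 : H 0 = a := by simp only [hH]; linarith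
  have hHm : Monotone H := fun x y hxy => by simp only [hH]; linarith [hG hxy]
  have hHp : ∀ x, H (x + r) = H x + r := fun x => by simp only [hH, hGp]; ring
  have hHc : ∀ x ∈ ZInvM m, H x - x - a ∈ IdealM m := by
    intro x hx
    convert lift_congr hm hr hF hx using 1
    rw [← hH0]
    simp only [hH]
    linarith [hGF x]
  have hGperZ := add_mul_of_period hGp
  have hHG : ∀ n : ℕ, G^[n] 0 = H^[n] 0 + n * i * r := by
    intro n
    induction n with
    | zero => simp
    | succ n ih =>
      rw [Function.iterate_succ_apply', Function.iterate_succ_apply', ih]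
      have := hGperZ (n * i) (H^[n] 0)
      push_cast at this
      rw [this]
      simp only [hH]
      push_cast
      ring
  have horb : ∀ n : ℕ, H^[n] 0 ∈ ZInvM m ∧ H^[n] 0 - n * a ∈ IdealM m ∧ 0 ≤ H^[n] 0 ∧
      H^[n + 1] 0 ≤ n * r + a := by
    intro n
    induction n with
    | zero => simpa [hH0, I_zero] using Z_int (m := m) 0
    | succ n ih =>
      obtain ⟨i1, i2, i3, i4⟩ := ih
      have c := hHc _ i1
      rw [Function.iterate_succ_apply'] at *
      refine ⟨?_, ?_, ?_, ?_⟩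
      · convert Z_add hm (I_subset_Z hm c) (Z_add hm i1 haZ) using 1
        ring
      · convert I_add hm c i2 using 1
        push_cast
        ring
      · have := hHm i3
        linarith
      · have h1 : H (H^[n] 0) ≤ ((n + 1 : ℕ) : ℤ) * (r : ℝ) := by push_cast; linarith
        have h2 := hHm h1
        have h3 := add_mul_of_period hHp ((n + 1 : ℕ) : ℤ) 0
        rw [zero_add] at h3
        rw [h3, hH0] at h2
        rw [Function.iterate_succ_apply', Function.iterate_succ_apply']
        push_cast at *
        linarith
  obtain ⟨K, hK⟩ := (AddCircle.coe_eq_zero_iff (r : ℝ)).1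
    (show ((G^[q] 0 : ℝ) : AddCircle (r : ℝ)) = 0 by
      rw [← iterate_lift hGf, ← hord, pow_orderOf_eq_one]; simp)
  rw [zsmul_eq_mul] at hK
  have hGk : ∀ k : ℕ, G^[q * k] 0 = k * K * r := by
    intro k
    induction k with
    | zero => simp
    | succ k ih =>
      have hGqp : ∀ x, G^[q] (x + r) = G^[q] x + r := by
        intro x
        have : Function.Semiconj (fun x => x + (r : ℝ)) G G := fun x => (hGp x).symm
        exact ((this.iterate_right q) x).symm
      have h1 := add_mul_of_period hGqp (k * K) 0
      rw [mul_add, mul_one, add_comm, Function.iterate_add_apply, ih]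
      push_cast at *
      rw [zero_add] at h1
      rw [h1, ← hK]
      ring
  have hLK : L = K / q := by
    have ht : Tendsto (fun k : ℕ => q * (k + 1)) atTop atTop :=
      tendsto_atTop_mono (fun k => show k ≤ q * (k + 1) by nlinarith) tendsto_id
    have h1 := hL.comp ht
    refine tendsto_nhds_unique h1 (tendsto_const_nhds.congr ?_)
    intro k
    simp only [Function.comp]
    rw [hGk]
    push_cast
    field_simp
  obtain ⟨j, hj⟩ := (AddCircle.coe_eq_zero_iff (1 : ℝ)).1
    (show ((L - 1 / q : ℝ) : AddCircle (1 : ℝ)) = 0 by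
      rw [AddCircle.coe_sub, hLq, sub_self])
  rw [zsmul_eq_mul, mul_one, hLK] at hj
  have hKj : K = 1 + j * q := by
    have : (K : ℝ) = 1 + j * q := by
      field_simp at hj
      linarith
    exact_mod_cast this
  have hHq : H^[q] 0 = ((1 + (j - i) * q : ℤ) : ℝ) * r := by
    have := hHG q
    rw [← hK, hKj] at this
    push_cast at *
    linarith
  -- `0 ≤ H^[q] 0 < q * r` pins the winding number `1 + (j - i) * q` to `1`.
  have hb1 := (horb q).2.2.1
  have hb2 := (horb (q - 1)).2.2.2
  rw [Nat.sub_add_cancel (by omega), Nat.cast_sub (by omega)] at hb2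
  have hb3 : H^[q] 0 < ((q : ℤ) : ℝ) * r := by push_cast at *; linarith
  rw [hHq] at hb1 hb3
  have hb1' : 0 ≤ 1 + (j - i) * (q : ℤ) := by
    have := nonneg_of_mul_nonneg_left hb1 hr0
    exact_mod_cast this
  have hb3' : 1 + (j - i) * (q : ℤ) < q := by
    have := lt_of_mul_lt_mul_right hb3 hr0.le
    exact_mod_cast this
  have hji : j - i = 0 := by
    have hq2 : (2 : ℤ) ≤ q := by exact_mod_cast hq
    have h1 : j - i < 1 := by
      by_contra hcon
      push Not at hcon
      nlinarith
    have h2 : -1 < j - i := by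
      by_contra hcon
      push Not at hcon
      nlinarith
    omega
  have := (horb q).2.1
  rw [hHq, hji] at this
  simpa using this

/-! ### Existence: conjugating a translation -/

/-- A strictly increasing function on a fundamental interval `[0, P]`, sending it onto
`[0, R]`, extends to an increasing homeomorphism of `ℝ` intertwining the translations by `P`
and `R`. -/
lemma exists_extension {P R : ℝ} (hP : 0 < P) {g : ℝ → ℝ} (hg : StrictMono g)
    (hgc : Continuous g) (hg0 : g 0 = 0) (hgP : g P = R) :
    ∃ h : ℝ ≃o ℝ, (∀ x, h (x + P) = h x + R) ∧ ∀ x, 0 ≤ x → x ≤ P → h x = g x := by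
  have hR : 0 < R := by rw [← hgP, ← hg0]; exact hg hP
  set H : ℝ → ℝ := fun x => ⌊x / P⌋ * R + g (x - ⌊x / P⌋ * P) with hH
  have fl1 : ∀ x : ℝ, 0 ≤ x - ⌊x / P⌋ * P := by
    intro x
    have := (le_div_iff₀ hP).1 (Int.floor_le (x / P))
    linarith
  have fl2 : ∀ x : ℝ, x - ⌊x / P⌋ * P < P := by
    intro x
    have := (div_lt_iff₀ hP).1 (Int.lt_floor_add_one (x / P))
    linarith
  have hper : ∀ x, H (x + P) = H x + R := by
    intro x
    have : ⌊(x + P) / P⌋ = ⌊x / P⌋ + 1 := by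
      rw [add_div, div_self hP.ne', Int.floor_add_one]
    simp only [hH, this]
    push_cast
    rw [show x + P - (⌊x / P⌋ + 1 : ℝ) * P = x - ⌊x / P⌋ * P by ring]
    ring
  have hbase : ∀ x, 0 ≤ x → x < P → H x = g x := by
    intro x h0 h1
    have : ⌊x / P⌋ = 0 := by
      rw [Int.floor_eq_zero_iff]
      exact ⟨by positivity, (div_lt_one hP).2 h1⟩
    simp [hH, this]
  have hmono : StrictMono H := by
    intro x y hxy
    have hle : ⌊x / P⌋ ≤ ⌊y / P⌋ := Int.floor_le_floor (by gcongr)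
    rcases hle.eq_or_lt with h | h
    · simp only [hH, h]
      have := hg (show x - ⌊y / P⌋ * P < y - ⌊y / P⌋ * P by linarith)
      linarith
    · have h1 := hg (fl2 x)
      have h2 := hg.monotone (fl1 y)
      rw [hgP] at h1
      rw [hg0] at h2
      have h3 : ((⌊x / P⌋ : ℝ) + 1) * R ≤ ⌊y / P⌋ * R := by
        have : (⌊x / P⌋ : ℝ) + 1 ≤ ⌊y / P⌋ := by exact_mod_cast h
        gcongr
      simp only [hH]
      linarith
  have hsurj : Function.Surjective H := by
    intro y
    set k := ⌊y / R⌋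
    have k1 := (le_div_iff₀ hR).1 (Int.floor_le (y / R))
    have k2 := (div_lt_iff₀ hR).1 (Int.lt_floor_add_one (y / R))
    obtain ⟨x, ⟨hx0, hxP⟩, hx⟩ := intermediate_value_Icc hP.le hgc.continuousOn
      (show y - k * R ∈ Set.Icc (g 0) (g P) by
        rw [hg0, hgP]; exact ⟨by linarith, by linarith⟩)
    have hxP' : x < P := by
      apply hg.lt_iff_lt.1
      rw [hx, hgP]
      linarith
    refine ⟨x + k * P, ?_⟩
    rw [add_mul_of_period hper, hbase x hx0 hxP', hx]
    ring
  refine ⟨hmono.orderIsoOfSurjective H hsurj, fun x => hper x, fun x h0 h1 => ?_⟩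
  rw [StrictMono.coe_orderIsoOfSurjective]
  rcases h1.eq_or_lt with rfl | h1
  · have := hper 0
    rw [zero_add, hbase 0 le_rfl hP, hg0, zero_add] at this
    rw [this, hgP]
  · exact hbase x h0 h1

/-- A lift is `PL_m` as soon as it is affine between consecutive elements of a finite set of
breakpoints; this replaces the ordered enumeration by a plain finite set. -/
lemma isPLmLift_of_finset {m : ℕ} {R : ℝ} {F : ℝ → ℝ} (hF : StrictMono F)
    (hFp : ∀ x, F (x + R) = F x + R) (B : Finset ℝ) (hB0 : 0 ∈ B) (hBR : R ∈ B)
    (hB : ∀ b ∈ B, 0 ≤ b ∧ b ≤ R ∧ b ∈ ZInvM m ∧ F b ∈ ZInvM m)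
    (haff : ∀ x ∈ B, ∀ y ∈ B, x < y → (∀ b ∈ B, x < b → b < y → False) →
      ∃ (s : ℤ) (β : ℝ), ∀ z ∈ Set.Icc x y, F z = (m : ℝ) ^ s * z + β) :
    IsPLmLift m R R F := by
  obtain ⟨n, hn⟩ : ∃ n, B.card = n + 1 :=
    Nat.exists_eq_succ_of_ne_zero (Finset.card_ne_zero_of_mem hB0)
  have hmem := B.orderEmbOfFin_mem hn
  have hsurj : ∀ b ∈ B, ∃ i, B.orderEmbOfFin hn i = b := by
    intro b hb
    have : b ∈ Set.range (B.orderEmbOfFin hn) := by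
      rw [Finset.range_orderEmbOfFin]; exact hb
    exact this
  have hmono := (B.orderEmbOfFin hn).strictMono
  refine ⟨hF, hFp, n, B.orderEmbOfFin hn, hmono, ?_, ?_, fun i => (hB _ (hmem i)).2.2.1,
    fun i => (hB _ (hmem i)).2.2.2, fun i => ?_⟩
  · obtain ⟨j, hj⟩ := hsurj 0 hB0
    refine le_antisymm ?_ (hB _ (hmem 0)).1
    rw [← hj]
    exact hmono.monotone (Fin.zero_le j)
  · obtain ⟨j, hj⟩ := hsurj R hBR
    refine le_antisymm (hB _ (hmem _)).2.1 ?_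
    rw [← hj]
    exact hmono.monotone (Fin.le_last j)
  · refine haff _ (hmem _) _ (hmem _) (hmono (Fin.castSucc_lt_succ (i := i))) ?_
    intro b hb h1 h2
    obtain ⟨j, rfl⟩ := hsurj b hb
    have h1' := hmono.lt_iff_lt.1 h1
    have h2' := hmono.lt_iff_lt.1 h2
    simp only [Fin.lt_def, Fin.val_castSucc, Fin.val_succ] at h1' h2'
    omega

/-- The model homeomorphism: a `PL_m` map `h` from the circle of length `q·a` to the circle of
length `r` with `h 0 = 0` and `h a = a`. It is the identity on `[0, a]`, and its slope
changes once, at `c`, on `[a, q·a]`. -/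
lemma exists_model {m r q : ℕ} (hm : 2 ≤ m) (hq : 2 ≤ q) {a : ℝ}
    (haZ : a ∈ ZInvM m) (ha0 : 0 < a) (har : a < (r : ℝ))
    (hI : (r : ℝ) - q * a ∈ IdealM m) :
    ∃ (h : ℝ ≃o ℝ) (c : ℝ) (t : ℤ), a ≤ c ∧ c < q * a ∧ c ∈ ZInvM m ∧
      (∀ x, h (x + q * a) = h x + r) ∧
      (∀ x, 0 ≤ x → x ≤ a → h x = x) ∧
      (∀ x, a ≤ x → x ≤ c → h x = a + (m : ℝ) ^ (t + 1) * (x - a)) ∧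
      (∀ x, c ≤ x → x ≤ q * a → h x = r + (m : ℝ) ^ t * (x - q * a)) := by
  have hm0 := mpos hm
  have hm1 : (1 : ℝ) < m := by exact_mod_cast hm
  have hq2 : (2 : ℝ) ≤ q := by exact_mod_cast hq
  have hL : 0 < ((q : ℝ) - 1) * a := by
    have : (0 : ℝ) < q - 1 := by linarith
    positivity
  -- The average slope on `[a, q * a]` lies in `[m ^ t, m ^ (t + 1))`.
  obtain ⟨t, ht1, ht2⟩ := exists_mem_Ico_zpow (x := ((r : ℝ) - a) / (((q : ℝ) - 1) * a))
    (y := (m : ℝ)) (by apply div_pos _ hL; linarith) hm1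
  rw [le_div_iff₀ hL] at ht1
  rw [div_lt_iff₀ hL] at ht2
  have hB : 0 < (m : ℝ) ^ t := zpow_pos hm0 t
  have hA : (m : ℝ) ^ (t + 1) = m * (m : ℝ) ^ t := by rw [zpow_add_one₀ hm0.ne']; ring
  have hA0 : 0 < (m : ℝ) ^ (t + 1) := zpow_pos hm0 _
  have hmem : (r : ℝ) - a - (m : ℝ) ^ t * (((q : ℝ) - 1) * a) ∈ IdealM m := by
    have hqa : ((q : ℝ) - 1) * a ∈ ZInvM m :=
      Z_mul hm (by simpa using Z_sub hm (Z_nat q) (Z_nat 1)) haZ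
    convert I_sub hm hI (I_mul hm hqa (zpow_sub_one_mem hm t)) using 1
    ring
  obtain ⟨z, hz, hze⟩ := hmem
  -- Solving `m ^ (t + 1) * p + m ^ t * (q * a - a - p) = r - a` for `p = c - a`.
  set p := (m : ℝ) ^ (-t) * z with hp
  have hBp : (m : ℝ) ^ t * p = z := by
    rw [hp, ← mul_assoc, ← zpow_add₀ hm0.ne']; simp
  have hz0 : 0 ≤ z := by
    have : 0 ≤ ((m : ℝ) - 1) * z := by linarith
    exact nonneg_of_mul_nonneg_right this (by linarith)
  have hp0 : 0 ≤ p := by rw [hp]; positivity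
  have hpL : p < (q - 1) * a := by
    have : ((m : ℝ) - 1) * ((m : ℝ) ^ t * p) < ((m : ℝ) - 1) * ((m : ℝ) ^ t * ((q - 1) * a)) := by
      rw [hBp]
      rw [hA] at ht2
      linarith
    have := lt_of_mul_lt_mul_left this (by linarith)
    exact lt_of_mul_lt_mul_left this hB.le
  have hpZ : p ∈ ZInvM m := Z_mul hm (Z_zpow _) hz
  have hmatch : a + (m : ℝ) ^ (t + 1) * p = r + (m : ℝ) ^ t * (a + p - q * a) := by
    rw [hA]
    linear_combination ((m : ℝ) - 1) * hBp - hze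
  set A := (m : ℝ) ^ (t + 1)
  set b := (m : ℝ) ^ t
  have haP : a < q * a := by linarith
  set g : ℝ → ℝ := fun x => if x ≤ a then x else
    if x ≤ a + p then a + A * (x - a) else r + b * (x - q * a) with hg
  have g1 : ∀ x, x ≤ a → g x = x := fun x hx => by simp only [hg, if_pos hx]
  have g2 : ∀ x, a ≤ x → x ≤ a + p → g x = a + A * (x - a) := by
    intro x h1 h2
    rcases h1.eq_or_lt with rfl | h1
    · rw [g1 _ le_rfl]; ring
    · simp only [hg, if_neg h1.not_ge, if_pos h2]
  have g3 : ∀ x, a + p ≤ x → g x = r + b * (x - q * a) := by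
    intro x h1
    rcases h1.eq_or_lt with rfl | h1
    · rw [g2 _ (by linarith) le_rfl, ← hmatch]; ring
    · simp only [hg, if_neg h1.not_ge, if_neg (show ¬ x ≤ a by linarith)]
  have hmono : StrictMono g := by
    have m1 : StrictMonoOn g (Set.Iic a) := by
      intro x hx y hy hxy
      rwa [g1 x hx, g1 y hy]
    have m2 : StrictMonoOn g (Set.Icc a (a + p)) := by
      intro x hx y hy hxy
      rw [g2 x hx.1 hx.2, g2 y hy.1 hy.2]
      gcongr
    have m3 : StrictMonoOn g (Set.Ici (a + p)) := by
      intro x hx y hy hxy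
      rw [g3 x hx, g3 y hy]
      gcongr
    have m12 := m1.union m2 isGreatest_Iic (isLeast_Icc (by linarith))
    rw [Set.Iic_union_Icc_eq_Iic (by linarith)] at m12
    exact m12.Iic_union_Ici m3
  have hcont : Continuous g := by
    refine Continuous.if_le continuous_id (Continuous.if_le (by fun_prop) (by fun_prop)
      continuous_id continuous_const ?_) continuous_id continuous_const ?_
    · rintro x rfl
      rw [← hmatch]; ring
    · rintro x rfl
      simp [hp0]
  obtain ⟨h, hper, hh⟩ := exists_extension (P := q * a) (R := r) (by linarith) hmono hcont
    (g1 0 ha0.le) (by rw [g3 _ (by linarith)]; ring)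
  refine ⟨h, a + p, t, by linarith, by linarith, Z_add hm haZ hpZ, hper, ?_, ?_, ?_⟩
  · intro x h0 h1
    rw [hh x h0 (by linarith), g1 x h1]
  · intro x h0 h1
    rw [hh x (by linarith) (by linarith), g2 x h0 h1]
  · intro x h0 h1
    rw [hh x (by linarith) h1, g3 x h0]

/-- Conjugating the translation by `a` with the model homeomorphism gives a `PL_m` lift. -/
lemma conj_isPLmLift {m r q : ℕ} (hm : 2 ≤ m) (hq : 2 ≤ q) {a : ℝ}
    (haZ : a ∈ ZInvM m) (ha0 : 0 < a) {h : ℝ ≃o ℝ} {c : ℝ} {t : ℤ}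
    (hac : a ≤ c) (hcP : c < q * a) (hcZ : c ∈ ZInvM m)
    (hper : ∀ x, h (x + q * a) = h x + r)
    (h1 : ∀ x, 0 ≤ x → x ≤ a → h x = x)
    (h2 : ∀ x, a ≤ x → x ≤ c → h x = a + (m : ℝ) ^ (t + 1) * (x - a))
    (h3 : ∀ x, c ≤ x → x ≤ q * a → h x = r + (m : ℝ) ^ t * (x - q * a)) :
    IsPLmLift m r r (fun x => h (h.symm x + a)) := by
  have hm0 := mpos hm
  have hq2 : (2 : ℝ) ≤ q := by exact_mod_cast hq
  have haP : 2 * a ≤ q * a := by gcongr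
  set P := (q : ℝ) * a with hP
  have hPZ : P ∈ ZInvM m := Z_mul hm (Z_nat q) haZ
  have hh0 : h 0 = 0 := h1 0 le_rfl ha0.le
  have hhP : h P = r := by rw [h3 P hcP.le le_rfl]; ring
  have h4 : ∀ x, P ≤ x → x ≤ P + a → h x = r + (x - P) := by
    intro x hx hx'
    have := hper (x - P)
    rw [sub_add_cancel, h1 (x - P) (by linarith) (by linarith)] at this
    linarith
  have hhZ : ∀ x ∈ ZInvM m, 0 ≤ x → x ≤ P + a → h x ∈ ZInvM m := by
    intro x hx hx0 hxP
    rcases le_total x a with l1 | l1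
    · rwa [h1 x hx0 l1]
    rcases le_total x c with l2 | l2
    · rw [h2 x l1 l2]
      exact Z_add hm haZ (Z_mul hm (Z_zpow _) (Z_sub hm hx haZ))
    rcases le_total x P with l3 | l3
    · rw [h3 x l2 l3]
      exact Z_add hm (Z_nat r) (Z_mul hm (Z_zpow _) (Z_sub hm hx hPZ))
    · rw [h4 x l3 hxP]
      exact Z_add hm (Z_nat r) (Z_sub hm hx hPZ)
  have haff : ∀ u v, 0 ≤ u → u < v → v ≤ P + a → (u < a → a < v → False) →
      (u < c → c < v → False) → (u < P → P < v → False) →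
      ∃ (s : ℤ) (β : ℝ), ∀ z ∈ Set.Icc u v, h z = (m : ℝ) ^ s * z + β := by
    intro u v hu huv hv na nc nP
    rcases le_or_gt v a with l1 | l1
    · exact ⟨0, 0, fun z hz => by rw [h1 z (hu.trans hz.1) (hz.2.trans l1)]; simp⟩
    have k1 : a ≤ u := not_lt.1 fun k => na k l1
    rcases le_or_gt v c with l2 | l2
    · exact ⟨t + 1, a - (m : ℝ) ^ (t + 1) * a, fun z hz => by
        rw [h2 z (k1.trans hz.1) (hz.2.trans l2)]; ring⟩
    have k2 : c ≤ u := not_lt.1 fun k => nc k l2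
    rcases le_or_gt v P with l3 | l3
    · exact ⟨t, r - (m : ℝ) ^ t * P, fun z hz => by
        rw [h3 z (k2.trans hz.1) (hz.2.trans l3)]; ring⟩
    have k3 : P ≤ u := not_lt.1 fun k => nP k l3
    exact ⟨0, r - P, fun z hz => by
      rw [h4 z (k3.trans hz.1) (hz.2.trans hv)]; simp; ring⟩
  -- Breakpoints, seen through `h`: those of `h` and their translates by `-a`, modulo `q * a`.
  set W : Finset ℝ := {0, a, c, c - a, P - a, P} with hW
  have hWp : ∀ w ∈ W, 0 ≤ w ∧ w ≤ P ∧ w ∈ ZInvM m := by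
    intro w hw
    simp only [hW, Finset.mem_insert, Finset.mem_singleton] at hw
    rcases hw with rfl | rfl | rfl | rfl | rfl | rfl
    · exact ⟨le_rfl, by linarith, by simpa using Z_int (m := m) 0⟩
    · exact ⟨by linarith, by linarith, haZ⟩
    · exact ⟨by linarith, by linarith, hcZ⟩
    · exact ⟨by linarith, by linarith, Z_sub hm hcZ haZ⟩
    · exact ⟨by linarith, by linarith, Z_sub hm hPZ haZ⟩
    · exact ⟨by linarith, by linarith, hPZ⟩
  refine isPLmLift_of_finset ?_ ?_ (W.image h) ?_ ?_ ?_ ?_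
  · intro x y hxy
    have := h.symm.strictMono hxy
    exact h.strictMono (by linarith)
  · intro x
    have : h.symm (x + r) = h.symm x + P := by
      rw [OrderIso.symm_apply_eq, hper, OrderIso.apply_symm_apply]
    change h (h.symm (x + r) + a) = h (h.symm x + a) + r
    rw [this, ← hper]
    congr 1
    ring
  · exact Finset.mem_image.2 ⟨0, by simp [hW], hh0⟩
  · exact Finset.mem_image.2 ⟨P, by simp [hW], hhP⟩
  · intro b hb
    obtain ⟨w, hw, rfl⟩ := Finset.mem_image.1 hb
    obtain ⟨w0, wP, wZ⟩ := hWp w hw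
    refine ⟨?_, ?_, hhZ w wZ w0 (by linarith), ?_⟩
    · rw [← hh0]; exact h.monotone w0
    · rw [← hhP]; exact h.monotone wP
    · simp only [OrderIso.symm_apply_apply]
      exact hhZ _ (Z_add hm wZ haZ) (by linarith) (by linarith)
  · intro x hx y hy hxy hno
    obtain ⟨u, hu, rfl⟩ := Finset.mem_image.1 hx
    obtain ⟨v, hv, rfl⟩ := Finset.mem_image.1 hy
    obtain ⟨u0, uP, -⟩ := hWp u hu
    obtain ⟨v0, vP, -⟩ := hWp v hv
    have huv := h.lt_iff_lt.1 hxy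
    have hno' : ∀ w ∈ W, u < w → w < v → False := fun w hw k1 k2 =>
      hno (h w) (Finset.mem_image_of_mem _ hw) (h.strictMono k1) (h.strictMono k2)
    obtain ⟨s, β, hs⟩ := haff u v u0 huv (by linarith) (hno' a (by simp [hW]))
      (hno' c (by simp [hW])) (hno' P (by simp [hW]))
    obtain ⟨s', β', hs'⟩ := haff (u + a) (v + a) (by linarith) (by linarith) (by linarith)
      (fun k _ => by linarith)
      (fun k k' => hno' (c - a) (by simp [hW]) (by linarith) (by linarith))
      (fun k k' => hno' (P - a) (by simp [hW]) (by linarith) (by linarith))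
    refine ⟨s' - s, β' + (m : ℝ) ^ s' * a - (m : ℝ) ^ (s' - s) * β, fun z hz => ?_⟩
    obtain ⟨w, rfl⟩ := h.surjective z
    have w1 := h.le_iff_le.1 hz.1
    have w2 := h.le_iff_le.1 hz.2
    simp only [OrderIso.symm_apply_apply]
    rw [hs' (w + a) ⟨by linarith, by linarith⟩, hs w ⟨w1, w2⟩, zpow_sub₀ hm0.ne']
    have : (m : ℝ) ^ s ≠ 0 := (zpow_pos hm0 s).ne'
    field_simp
    ring

/-- A bijection of `ℝ` commuting with the translation by `r` induces a
permutation of `ℝ/rℤ`. -/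
lemma exists_perm {r : ℝ} (e : ℝ ≃ ℝ) (he : ∀ x, e (x + r) = e x + r) :
    ∃ f : Equiv.Perm (AddCircle r), ∀ x : ℝ, f ↑x = ↑(e x) := by
  have p1 : Function.Periodic (fun x => ((e x : ℝ) : AddCircle r)) r := by
    intro x
    simp [he]
  have p2 : Function.Periodic (fun x => ((e.symm x : ℝ) : AddCircle r)) r := by
    intro x
    have : e.symm (x + r) = e.symm x + r := by
      rw [Equiv.symm_apply_eq, he, Equiv.apply_symm_apply]
    simp [this]
  refine ⟨⟨p1.lift, p2.lift, ?_, ?_⟩, fun x => p1.lift_coe x⟩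
  · intro x
    induction x using QuotientAddGroup.induction_on with
    | H x =>
      rw [p1.lift_coe, p2.lift_coe, Equiv.symm_apply_apply]
  · intro x
    induction x using QuotientAddGroup.induction_on with
    | H x =>
      rw [p2.lift_coe, p1.lift_coe, Equiv.apply_symm_apply]

/-- Implication (2) ⟹ (1). -/
lemma backward {m r q : ℕ} (hm : 2 ≤ m) (hr : 1 ≤ r) (hq : 2 ≤ q) {a : ℝ}
    (haZ : a ∈ ZInvM m) (ha0 : 0 < a) (har : a < (r : ℝ))
    (hI : (r : ℝ) - q * a ∈ IdealM m) :
    ∃ f : Equiv.Perm (AddCircle (r : ℝ)), InT r m f ∧ orderOf f = q ∧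
        HasRotNum r f ((1 / (q : ℝ) : ℝ) : AddCircle (1 : ℝ)) ∧
        f ((0 : ℝ) : AddCircle (r : ℝ)) = ((a : ℝ) : AddCircle (r : ℝ)) := by
  have hr0 : (0 : ℝ) < r := by exact_mod_cast hr
  have hq0 : (0 : ℝ) < q := by positivity
  obtain ⟨h, c, t, hac, hcP, hcZ, hper, h1, h2, h3⟩ := exists_model hm hq haZ ha0 har hI
  have hPL := conj_isPLmLift hm hq haZ ha0 hac hcP hcZ hper h1 h2 h3
  have hh0 : h 0 = 0 := h1 0 le_rfl ha0.le
  have hs0 : h.symm 0 = 0 := by rw [OrderIso.symm_apply_eq, hh0]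
  set F : ℝ → ℝ := fun x => h (h.symm x + a) with hF
  have hFp := hPL.2.1
  obtain ⟨f, hf⟩ := exists_perm ((h.symm.toEquiv.trans (Equiv.addRight a)).trans h.toEquiv) hFp
  replace hf : ∀ x : ℝ, f ↑x = ↑(F x) := hf
  have hit : ∀ (n : ℕ) (x : ℝ), F^[n] x = h (h.symm x + n * a) := by
    intro n x
    induction n with
    | zero => simp
    | succ n ih =>
      rw [Function.iterate_succ_apply', ih]
      simp only [hF, OrderIso.symm_apply_apply]
      push_cast
      congr 1
      ring
  have hqa : (0 : ℝ) < q * a := by positivity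
  refine ⟨f, ⟨F, hPL, hf⟩, ?_, ⟨F, hPL.1.monotone, hFp, hf, 1 / q, ?_, rfl⟩, ?_⟩
  · rw [orderOf_eq_iff (by omega)]
    constructor
    · ext x
      induction x using QuotientAddGroup.induction_on with
      | H x =>
        change (f ^ q) ((x : ℝ) : AddCircle (r : ℝ)) = ((x : ℝ) : AddCircle (r : ℝ))
        rw [iterate_lift hf, hit, hper, OrderIso.apply_symm_apply]
        simp
    · intro k hkq hk0 hk
      have e1 : ((F^[k] 0 : ℝ) : AddCircle (r : ℝ)) = 0 := by
        rw [← iterate_lift hf, hk]; simp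
      obtain ⟨n, hn⟩ := (AddCircle.coe_eq_zero_iff (r : ℝ)).1 e1
      rw [hit, hs0, zero_add, zsmul_eq_mul] at hn
      have hk0' : (0 : ℝ) < k := by exact_mod_cast hk0
      have hkq' : (k : ℝ) < q := by exact_mod_cast hkq
      have l1 : h 0 < h (k * a) := h.strictMono (by positivity)
      have l2 : h (k * a) < h (0 + q * a) := h.strictMono (by rw [zero_add]; gcongr)
      rw [hper, hh0, ← hn] at l2
      rw [hh0, ← hn] at l1
      have l1' : (0 : ℝ) < n := pos_of_mul_pos_left l1 hr0.le
      have l2' : (n : ℝ) < 1 := by nlinarith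
      have : 0 < n := by exact_mod_cast l1'
      have : n < 1 := by exact_mod_cast l2'
      omega
  · -- `h` stays within distance `r` of the linear map of slope `r / (q * a)`.
    have hb : ∀ n : ℕ, (n / q - 1 : ℝ) * r ≤ h (n * a) ∧ h (n * a) ≤ (n / q + 1 : ℝ) * r := by
      intro n
      set k := ⌊(n : ℝ) / q⌋
      have k1 : (k : ℝ) ≤ n / q := Int.floor_le _
      have k2 : (n : ℝ) / q < k + 1 := Int.lt_floor_add_one _
      have k1' := (le_div_iff₀ hq0).1 k1
      have k2' := (div_lt_iff₀ hq0).1 k2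
      have b1 := add_mul_of_period hper k 0
      have b2 := add_mul_of_period hper (k + 1) 0
      rw [zero_add, hh0, zero_add] at b1 b2
      have c1 : h (k * (q * a)) ≤ h (n * a) := h.monotone (by
        rw [← mul_assoc]; gcongr)
      have c2 : h (n * a) ≤ h ((k + 1 : ℤ) * (q * a)) := h.monotone (by
        rw [← mul_assoc]; push_cast; gcongr)
      rw [b1] at c1
      rw [b2] at c2
      push_cast at c2
      constructor
      · refine le_trans ?_ c1
        gcongr
        linarith
      · refine c2.trans ?_
        gcongr
    have t1 : Tendsto (fun n : ℕ => 1 / (q : ℝ) - 1 / n) atTop (𝓝 (1 / q)) := by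
      simpa using (tendsto_const_nhds (x := 1 / (q : ℝ))).sub
        (tendsto_one_div_atTop_nhds_zero_nat (𝕜 := ℝ))
    have t2 : Tendsto (fun n : ℕ => 1 / (q : ℝ) + 1 / n) atTop (𝓝 (1 / q)) := by
      simpa using (tendsto_const_nhds (x := 1 / (q : ℝ))).add
        (tendsto_one_div_atTop_nhds_zero_nat (𝕜 := ℝ))
    refine tendsto_of_tendsto_of_tendsto_of_le_of_le' t1 t2 ?_ ?_
    all_goals
      filter_upwards [eventually_gt_atTop 0] with n hn
      have hn0 : (0 : ℝ) < n := by exact_mod_cast hn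
      rw [hit, hs0, zero_add]
    · rw [le_div_iff₀ (by positivity)]
      refine le_trans (le_of_eq ?_) (hb n).1
      field_simp
    · rw [div_le_iff₀ (by positivity)]
      refine le_trans (hb n).2 (le_of_eq ?_)
      field_simp
  · rw [hf]
    simp only [hF]
    rw [hs0, zero_add, h1 a ha0.le le_rfl]

/-- For `a = N_a/m^{s_a} ∈ ℤ[1/m] ∩ (0, r)`, the following are equivalent:
(1) there exists `f ∈ T_{r,m}` of order `q` with `f(0) = a` and rotation number `1/q`;
(2) `r - q·a ∈ (m-1)·ℤ[1/m]`; (3) `r - q·N_a` is a multiple of `m-1`. -/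
theorem exists_order_q_with_prescribed_value (m r q : ℕ) (hm : 2 ≤ m) (hr : 1 ≤ r)
    (hq : 2 ≤ q) (Na sa : ℤ) (a : ℝ) (ha : a = (Na : ℝ) / (m : ℝ) ^ sa)
    (ha0 : 0 < a) (har : a < (r : ℝ)) :
    ((∃ f : Equiv.Perm (AddCircle (r : ℝ)), InT r m f ∧ orderOf f = q ∧
        HasRotNum r f ((1 / (q : ℝ) : ℝ) : AddCircle (1 : ℝ)) ∧
        f ((0 : ℝ) : AddCircle (r : ℝ)) = ((a : ℝ) : AddCircle (r : ℝ))) ↔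
      (∃ z ∈ ZInvM m, (r : ℝ) - (q : ℝ) * a = ((m : ℝ) - 1) * z)) ∧
    ((∃ z ∈ ZInvM m, (r : ℝ) - (q : ℝ) * a = ((m : ℝ) - 1) * z) ↔
      ((m : ℤ) - 1) ∣ ((r : ℤ) - (q : ℤ) * Na)) := by

  have haZ : a ∈ ZInvM m := ⟨Na, -sa, by rw [ha, zpow_neg, div_eq_mul_inv]⟩
  refine ⟨⟨?_, ?_⟩, ?_⟩
  · rintro ⟨f, hT, hord, hrot, hf0⟩
    exact forward hm hr hq haZ ha0 har hT hord hrot hf0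
  · exact backward hm hr hq haZ ha0 har
  · rw [ha]
    exact cond_iff hm r q Na sa
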